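/- Let b ∈ ℂ, let s_0 > s_1 ≥ 0 and let ε > 0. Then there exists an abstract Swiss cheese A = ((a_n, r_n)) with a_0 = a_1 = b, r_0 = s_0, r_1 = s_1 and ρ_ann(A) = ∑_{n ≥ 2} r_n < ε, such that R(X_A) is regular. -/

import Mathlib

open Metric Set

/-- `R₀(X)`: the restrictions to `X` of rational functions with poles off `X`, i.e. quotients
`p/q` of complex polynomials with `q` nonvanishing on `X`. -/
def R0set (X : Set ℂ) : Set C(X, ℂ) :=
  {f | ∃ p q : Polynomial ℂ, (∀ x : X, q.eval (x : ℂ) ≠ 0) ∧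
    ∀ x : X, f x = p.eval (x : ℂ) / q.eval (x : ℂ)}

/-- `R(X)`: the uniform closure in `C(X, ℂ)` of the rational functions with poles off `X`.
(On the compact space `X` the topology of `C(X, ℂ)` is that of uniform convergence.) -/
noncomputable def Rx (X : Set ℂ) [CompactSpace X] : Subalgebra ℂ C(X, ℂ) :=
  (Algebra.adjoin ℂ (R0set X)).topologicalClosure

/-- A bounded point derivation on `R(X)` at `x`: a continuous linear functional `d` on `R(X)`
satisfying `d(fg) = f(x)d(g) + d(f)g(x)` for all `f, g ∈ R(X)`. -/
def IsBPD (X : Set ℂ) [CompactSpace X] (x : X) (d : Rx X →L[ℂ] ℂ) : Prop :=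
  ∀ f g : Rx X, d (f * g) = (f : C(X, ℂ)) x * d g + d f * (g : C(X, ℂ)) x

/-- `R(X)` is regular: for every closed `E ⊆ X` and `x ∈ X ∖ E` there is `f ∈ R(X)` with
`f(x) = 1` and `f ≡ 0` on `E`. -/
def RxRegular (X : Set ℂ) [CompactSpace X] : Prop :=
  ∀ E : Set X, IsClosed E → ∀ x : X, x ∉ E →
    ∃ f ∈ Rx X, f x = 1 ∧ ∀ y ∈ E, f y = 0

open Metric Set

/-- An abstract Swiss cheese: a sequence `((a_n, r_n))_{n ≥ 0}` of centres `a n ∈ ℂ` and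
non-negative radii `r n ∈ [0, ∞)`. -/
structure SwissCheese where
  a : ℕ → ℂ
  r : ℕ → ℝ
  r_nonneg : ∀ n, 0 ≤ r n

namespace SwissCheese

/-- The associated Swiss cheese set `X_A = closedBall(a₀, r₀) ∖ ⋃_{n ≥ 1} ball(a_n, r_n)`. -/
def cheeseSet (A : SwissCheese) : Set ℂ :=
  closedBall (A.a 0) (A.r 0) \ ⋃ n ∈ Set.Ici 1, ball (A.a n) (A.r n)

/-- The significant index set `S_A = {n ≥ 1 : r_n > 0}`. -/
def sig (A : SwissCheese) : Set ℕ := {n | 1 ≤ n ∧ 0 < A.r n}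

/-- The radius sum `ρ(A) = ∑_{n ≥ 1} r_n` is finite. -/
def RadSummable (A : SwissCheese) : Prop := Summable fun n => A.r (n + 1)

/-- The radius sum `ρ(A) = ∑_{n ≥ 1} r_n`. -/
noncomputable def radSum (A : SwissCheese) : ℝ := ∑' n, A.r (n + 1)

/-- The discrepancy `δ₁(A) = r₀ − ∑_{n ≥ 1} r_n`. -/
noncomputable def disc (A : SwissCheese) : ℝ := A.r 0 - A.radSum

/-- `A` is classical: `ρ(A) < ∞`, `r₀ > 0`, each significant closed disk is contained in
`ball(a₀, r₀)`, and distinct significant closed disks are disjoint. -/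
def IsClassical (A : SwissCheese) : Prop :=
  A.RadSummable ∧ 0 < A.r 0 ∧ ∀ k ∈ A.sig,
    closedBall (A.a k) (A.r k) ⊆ ball (A.a 0) (A.r 0) ∧
    ∀ l ∈ A.sig, l ≠ k → closedBall (A.a k) (A.r k) ∩ closedBall (A.a l) (A.r l) = ∅

/-- `A` is semiclassical: `ρ(A) < ∞`, `r₀ > 0`, each significant open disk is contained in
`ball(a₀, r₀)`, and distinct significant open disks are disjoint. -/
def IsSemiclassical (A : SwissCheese) : Prop :=
  A.RadSummable ∧ 0 < A.r 0 ∧ ∀ k ∈ A.sig,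
    ball (A.a k) (A.r k) ⊆ ball (A.a 0) (A.r 0) ∧
    ∀ l ∈ A.sig, l ≠ k → ball (A.a k) (A.r k) ∩ ball (A.a l) (A.r l) = ∅

/-- `A` is annular: `a₀ = a₁` and `r₀ > r₁ > 0`. -/
def IsAnnular (A : SwissCheese) : Prop := A.a 0 = A.a 1 ∧ A.r 1 < A.r 0 ∧ 0 < A.r 1

/-- The annular radius sum `ρ_ann(A) = ∑_{n ≥ 2} r_n`. -/
noncomputable def annRadSum (A : SwissCheese) : ℝ := ∑' n, A.r (n + 2)

/-- The annular discrepancy `δ_ann(A) = r₀ − r₁ − 2 ∑_{n ≥ 2} r_n`. -/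
noncomputable def annDisc (A : SwissCheese) : ℝ := A.r 0 - A.r 1 - 2 * A.annRadSum

/-- `A` is redundancy-free: every significant open disk meets `closedBall(a₀, r₀)`, and no
significant open disk is contained in another one. -/
def IsRedundancyFree (A : SwissCheese) : Prop :=
  ∀ k ∈ A.sig, (ball (A.a k) (A.r k) ∩ closedBall (A.a 0) (A.r 0)).Nonempty ∧
    ∀ l ∈ A.sig, l ≠ k → ¬ ball (A.a k) (A.r k) ⊆ ball (A.a l) (A.r l)

/-- `H_A(U)`: the set of significant indices whose closed disk meets `U`. -/
def HSet (A : SwissCheese) (U : Set ℂ) : Set ℕ :=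
  {n | n ∈ A.sig ∧ (closedBall (A.a n) (A.r n) ∩ U).Nonempty}

/-- `ρ_U(A) = ∑_{n ∈ H_A(U)} r_n`. -/
noncomputable def rhoU (A : SwissCheese) (U : Set ℂ) : ℝ := ∑' n : A.HSet U, A.r n

/-- The error set `E(A)`. -/
def errorSet (A : SwissCheese) : Set ℂ :=
  (⋃ m ∈ A.sig, ⋃ n ∈ A.sig, ⋃ _ : m ≠ n,
      closedBall (A.a m) (A.r m) ∩ closedBall (A.a n) (A.r n)) ∪
    ⋃ n ∈ A.sig, (ball (A.a 0) (A.r 0))ᶜ ∩ closedBall (A.a n) (A.r n)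

/-- A Swiss cheese set is compact. -/
instance (A : SwissCheese) : CompactSpace A.cheeseSet :=
  isCompact_iff_compactSpace.mp
    ((isCompact_closedBall _ _).diff (isOpen_biUnion fun _ _ => isOpen_ball))

end SwissCheese

/-! The function `(1 - ((z - c) / t)ᴺ)⁻¹` is, for large `N`, close to `1` well inside the circle
`|z - c| = t` and close to `0` well outside it. Its poles are `N` equally spaced points of the
circle; once disks of radius `δ / N` about them are removed, it is bounded by `3t / δ`, a bound
independent of `N`. So on circles `t₀ < t₁ < ⋯` increasing to radius `ρ` one can fix summable `δₙ`
first, hence the bounds, and then choose `Nₙ` so large that the product of these functions converges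
uniformly off the removed disks. The limit vanishes precisely where `|z - c| ≥ ρ`
(McKissick's construction). Doing this for a countable base of disks `|z - c| < ρ` makes `R(X)`
regular for every compact `X` that misses all the removed disks. -/

open Filter Topology
open scoped NNReal ENNReal

/-! ### Infinite products that vanish off an increasing union -/

theorem exists_pos_summable_mul {P : ℕ → ℝ} (hP : ∀ n, 0 < P n) :
    ∃ s : ℕ → ℝ, (∀ n, 0 < s n) ∧ Summable fun n => s n * P n := by
  refine ⟨fun n => (1 / 2) ^ n / P n, fun n => div_pos (by positivity) (hP n), ?_⟩
  simpa only [div_mul_cancel₀ _ (hP _).ne'] using summable_geometric_two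

section InfiniteProduct

variable {𝕜 : Type*} [NormedField 𝕜]

theorem ne_zero_of_tendsto_prod_of_summable_norm_sub_one [CompleteSpace 𝕜] {g : ℕ → 𝕜} {l : 𝕜}
    (hg : ∀ n, g n ≠ 0) (hsum : Summable fun n => ‖g n - 1‖)
    (hl : Tendsto (fun n => ∏ k ∈ Finset.range n, g k) atTop (𝓝 l)) : l ≠ 0 := by
  have hmul := (multipliable_one_add_of_summable hsum).tendsto_prod_tprod_nat
  have hne := tprod_one_add_ne_zero_of_summable (f := fun n => g n - 1) (by simpa using hg) hsum
  simp only [add_sub_cancel] at hmul hne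
  exact tendsto_nhds_unique hl hmul ▸ hne

variable {X : Type*} [TopologicalSpace X] [CompactSpace X] {h : ℕ → C(X, 𝕜)} {V : ℕ → Set X}
  {B s : ℕ → ℝ}

theorem norm_prod_range_apply_le (hB : ∀ n, ‖h n‖ ≤ B n) (n : ℕ) (x : X) :
    ‖(∏ k ∈ Finset.range n, h k) x‖ ≤ ∏ k ∈ Finset.range n, B k := by
  rw [ContinuousMap.prod_apply, norm_prod]
  exact Finset.prod_le_prod (fun _ _ => norm_nonneg _)
    fun k _ => ((h k).norm_coe_le_norm x).trans (hB k)

theorem norm_prod_range_succ_apply_le_of_notMem (hB : ∀ n, ‖h n‖ ≤ B n) (hs : ∀ n, 0 ≤ s n)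
    (near_zero : ∀ n, ∀ x ∉ V (n + 1), ‖h n x‖ ≤ s n) {n : ℕ} {x : X} (hx : x ∉ V (n + 1)) :
    ‖(∏ k ∈ Finset.range (n + 1), h k) x‖ ≤ s n * ∏ k ∈ Finset.range n, B k := by
  rw [Finset.prod_range_succ, ContinuousMap.mul_apply, norm_mul, mul_comm]
  exact mul_le_mul (near_zero n x hx) (norm_prod_range_apply_le hB n x) (norm_nonneg _) (hs n)

theorem norm_prod_range_succ_sub_le (hB : ∀ n, ‖h n‖ ≤ B n) (hB₁ : ∀ n, 1 ≤ B n)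
    (hs : ∀ n, 0 ≤ s n) (near_one : ∀ n, ∀ x ∈ V n, ‖h n x - 1‖ ≤ s n)
    (near_zero : ∀ n, ∀ x ∉ V (n + 1), ‖h n x‖ ≤ s n) (n : ℕ) :
    ‖∏ k ∈ Finset.range (n + 2), h k - ∏ k ∈ Finset.range (n + 1), h k‖ ≤
      s (n + 1) * ∏ k ∈ Finset.range (n + 3), B k +
        2 * (s n * ∏ k ∈ Finset.range (n + 2), B k) := by
  have B_nonneg (n) : 0 ≤ B n := zero_le_one.trans (hB₁ n)
  have prod_nonneg (n) : 0 ≤ ∏ k ∈ Finset.range n, B k := Finset.prod_nonneg fun k _ => B_nonneg k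
  have prod_mono : Monotone fun n => ∏ k ∈ Finset.range n, B k := by
    refine monotone_nat_of_le_succ fun n => ?_
    simpa only [Finset.prod_range_succ] using le_mul_of_one_le_right (prod_nonneg n) (hB₁ n)
  have first_nonneg := mul_nonneg (hs (n + 1)) (prod_nonneg (n + 3))
  have second_nonneg := mul_nonneg (hs n) (prod_nonneg (n + 2))
  refine (ContinuousMap.norm_le _ (by positivity)).2 fun x => ?_
  have factor : (∏ k ∈ Finset.range (n + 2), h k - ∏ k ∈ Finset.range (n + 1), h k) x =
      (h (n + 1) x - 1) * (∏ k ∈ Finset.range (n + 1), h k) x := by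
    rw [Finset.prod_range_succ _ (n + 1), ContinuousMap.sub_apply, ContinuousMap.mul_apply]
    ring
  rw [factor, norm_mul]
  by_cases hx : x ∈ V (n + 1)
  · calc
      _ ≤ s (n + 1) * ∏ k ∈ Finset.range (n + 3), B k :=
        mul_le_mul (near_one _ x hx)
          ((norm_prod_range_apply_le hB _ x).trans (prod_mono (by omega))) (norm_nonneg _) (hs _)
      _ ≤ _ := le_add_of_nonneg_right (by positivity)
  · have hsub : ‖h (n + 1) x - 1‖ ≤ 2 * B (n + 1) := calc
      _ ≤ ‖h (n + 1) x‖ + 1 := by simpa using norm_sub_le (h (n + 1) x) 1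
      _ ≤ 2 * B (n + 1) := by linarith [(h (n + 1)).norm_coe_le_norm x, hB (n + 1), hB₁ (n + 1)]
    calc
      _ ≤ 2 * B (n + 1) * (s n * ∏ k ∈ Finset.range (n + 1), B k) :=
        mul_le_mul hsub ((norm_prod_range_succ_apply_le_of_notMem hB hs near_zero hx).trans
          (mul_le_mul_of_nonneg_left (prod_mono n.le_succ) (hs n))) (norm_nonneg _)
          (mul_nonneg zero_le_two (B_nonneg _))
      _ = 2 * (s n * ∏ k ∈ Finset.range (n + 2), B k) := by
        rw [Finset.prod_range_succ _ (n + 1)]; ring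
      _ ≤ _ := le_add_of_nonneg_left first_nonneg

theorem exists_tendsto_prod_eq_zero_iff [CompleteSpace 𝕜] (hV : Monotone V)
    (hB : ∀ n, ‖h n‖ ≤ B n) (hB₁ : ∀ n, 1 ≤ B n) (hs : ∀ n, 0 ≤ s n)
    (hsB : Summable fun n => s n * ∏ k ∈ Finset.range (n + 2), B k) (hne : ∀ n x, h n x ≠ 0)
    (near_one : ∀ n, ∀ x ∈ V n, ‖h n x - 1‖ ≤ s n)
    (near_zero : ∀ n, ∀ x ∉ V (n + 1), ‖h n x‖ ≤ s n) :
    ∃ f : C(X, 𝕜), Tendsto (fun n => ∏ k ∈ Finset.range n, h k) atTop (𝓝 f) ∧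
      ∀ x, f x = 0 ↔ ∀ n, x ∉ V n := by
  have one_le_prod (n) : 1 ≤ ∏ k ∈ Finset.range n, B k := Finset.one_le_prod fun k _ => hB₁ k
  have hcauchy : CauchySeq fun n => ∏ k ∈ Finset.range (n + 1), h k :=
    cauchySeq_of_dist_le_of_summable _
      (fun n => by
        rw [dist_comm, dist_eq_norm]
        exact norm_prod_range_succ_sub_le hB hB₁ hs near_one near_zero n)
      (((summable_nat_add_iff 1).2 hsB).add (hsB.mul_left 2))
  obtain ⟨f, hf⟩ := cauchySeq_tendsto_of_complete hcauchy
  have hf_apply (x : X) : Tendsto (fun n => (∏ k ∈ Finset.range (n + 1), h k) x) atTop (𝓝 (f x)) :=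
    ((continuous_eval_const x).tendsto f).comp hf
  refine ⟨f, (tendsto_add_atTop_iff_nat 1).1 hf, fun x => ⟨fun hfx n hxn => ?_, fun hx => ?_⟩⟩
  · have hsummable : Summable fun k => ‖h k x - 1‖ := by
      refine hsB.of_norm_bounded_eventually_nat ?_
      filter_upwards [eventually_ge_atTop n] with k hk
      rw [norm_norm]
      exact (near_one k x (hV hk hxn)).trans (le_mul_of_one_le_right (hs k) (one_le_prod _))
    simp only [ContinuousMap.prod_apply] at hf_apply
    exact ne_zero_of_tendsto_prod_of_summable_norm_sub_one (hne · x) hsummable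
      ((tendsto_add_atTop_iff_nat 1).1 (hf_apply x)) hfx
  · refine tendsto_nhds_unique (hf_apply x)
      (squeeze_zero_norm (fun n => ?_) hsB.tendsto_atTop_zero)
    refine (norm_prod_range_succ_apply_le_of_notMem hB hs near_zero (hx _)).trans
      (mul_le_mul_of_nonneg_left ?_ (hs n))
    have hprod : 1 ≤ B n * B (n + 1) := one_le_mul_of_one_le_of_one_le (hB₁ _) (hB₁ _)
    rw [Finset.prod_range_succ, Finset.prod_range_succ, mul_assoc]
    exact le_mul_of_one_le_right (zero_le_one.trans (one_le_prod n)) hprod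

end InfiniteProduct

/-! ### The functions `(1 - wᴺ)⁻¹` -/

theorem eventually_forall_norm_inv_one_sub_pow_sub_one_le {𝕜 : Type*} [NormedField 𝕜] {r s : ℝ}
    (hr₀ : 0 ≤ r) (hr₁ : r < 1) (hs : 0 < s) :
    ∀ᶠ N : ℕ in atTop, ∀ w : 𝕜, ‖w‖ ≤ r → ‖(1 - w ^ N)⁻¹ - 1‖ ≤ s := by
  have hlim : Tendsto (fun v : 𝕜 => ‖(1 - v)⁻¹ - 1‖) (𝓝 0) (𝓝 0) := by
    have : ContinuousAt (fun v : 𝕜 => ‖(1 - v)⁻¹ - 1‖) 0 :=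
      (((continuousAt_const.sub continuousAt_id).inv₀ (by simp)).sub continuousAt_const).norm
    simpa using this.tendsto
  obtain ⟨δ, hδ, hball⟩ := Metric.eventually_nhds_iff_ball.1 (hlim.eventually_le_const hs)
  filter_upwards [(tendsto_pow_atTop_nhds_zero_of_lt_one hr₀ hr₁).eventually_lt_const hδ]
    with N hN w hw
  refine hball _ (mem_ball_zero_iff.2 ?_)
  rw [norm_pow]
  exact (pow_le_pow_left₀ (norm_nonneg w) hw N).trans_lt hN

theorem eventually_forall_norm_inv_one_sub_pow_le {𝕜 : Type*} [NormedField 𝕜] {r s : ℝ}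
    (hr : 1 < r) (hs : 0 < s) :
    ∀ᶠ N : ℕ in atTop, ∀ w : 𝕜, r ≤ ‖w‖ → ‖(1 - w ^ N)⁻¹‖ ≤ s := by
  filter_upwards [(tendsto_pow_atTop_atTop_of_one_lt hr).eventually_ge_atTop (1 + s⁻¹)]
    with N hN w hw
  have hlower : s⁻¹ ≤ ‖1 - w ^ N‖ := calc
    s⁻¹ ≤ r ^ N - 1 := by linarith
    _ ≤ ‖w‖ ^ N - 1 := by gcongr
    _ = ‖w ^ N‖ - ‖(1 : 𝕜)‖ := by rw [norm_pow, norm_one]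
    _ ≤ ‖1 - w ^ N‖ := by rw [norm_sub_rev]; exact norm_sub_norm_le _ _
  rw [norm_inv]
  exact inv_le_of_inv_le₀ hs hlower

theorem exists_pow_eq_one_norm_sub_le {u : ℂ} {N : ℕ} (hN : N ≠ 0) (hu : ‖u ^ N - 1‖ ≤ 1 / 2) :
    ∃ ζ : ℂ, ζ ^ N = 1 ∧ ‖u - ζ‖ ≤ 3 * ‖u ^ N - 1‖ / N := by
  set t := u ^ N - 1 with ht
  have ht_ne : 1 + t ≠ 0 := fun h => by
    rw [eq_neg_of_add_eq_zero_right h, norm_neg, norm_one] at hu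
    norm_num at hu
  -- `exp L` is the `N`-th root of `u ^ N` near `1`, so `u / exp L` is a root of unity near `u`.
  set L := Complex.log (1 + t) / N with hL
  have hroot : (u / Complex.exp L) ^ N = 1 := by
    rw [div_pow, ← Complex.exp_nat_mul, hL, mul_div_cancel₀ _ (Nat.cast_ne_zero.2 hN),
      Complex.exp_log ht_ne, ht, add_sub_cancel, div_self (by simpa [ht] using ht_ne)]
  have hL_le : ‖L‖ ≤ 3 / 2 * ‖t‖ / N := by
    rw [hL, norm_div, Complex.norm_natCast]
    gcongr
    exact Complex.norm_log_one_add_half_le_self hu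
  have hL_le_one : ‖L‖ ≤ 1 := calc
    ‖L‖ ≤ 3 / 2 * ‖t‖ := hL_le.trans
      (div_le_self (by positivity) (Nat.one_le_cast.2 (Nat.one_le_iff_ne_zero.2 hN)))
    _ ≤ 1 := by linarith
  refine ⟨u / Complex.exp L, hroot, ?_⟩
  calc
    ‖u - u / Complex.exp L‖ = ‖u / Complex.exp L * (Complex.exp L - 1)‖ := by
      rw [mul_sub, div_mul_cancel₀ _ (Complex.exp_ne_zero L), mul_one]
    _ = ‖Complex.exp L - 1‖ := by
      rw [norm_mul, Complex.norm_eq_one_of_pow_eq_one hroot hN, one_mul]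
    _ ≤ 2 * ‖L‖ := Complex.norm_exp_sub_one_le hL_le_one
    _ ≤ 2 * (3 / 2 * ‖t‖ / N) := by gcongr
    _ = 3 * ‖t‖ / N := by ring

theorem le_norm_one_sub_pow_of_forall_root {u : ℂ} {N : ℕ} (hN : N ≠ 0) {δ : ℝ} (hδ : δ ≤ 1)
    (h : ∀ ζ : ℂ, ζ ^ N = 1 → δ / N ≤ ‖u - ζ‖) : δ / 3 ≤ ‖1 - u ^ N‖ := by
  rw [norm_sub_rev]
  by_contra! hlt
  obtain ⟨ζ, hζ, hle⟩ := exists_pow_eq_one_norm_sub_le (u := u) hN (by linarith)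
  have := (div_le_div_iff_of_pos_right (by positivity)).1 ((h ζ hζ).trans hle)
  linarith

/-! ### Countable sets of disks -/

/-- The union of the open disks in `D`, where `(a, r) ∈ D` stands for the disk with centre `a` and
radius `r`; these are the holes of a Swiss cheese. -/
def holes (D : Set (ℂ × ℝ≥0)) : Set ℂ := ⋃ d ∈ D, ball d.1 d.2

/-- The sum of the radii of the disks in `D`, as an extended real so that it needs no summability
hypothesis. -/
noncomputable def totalRadius (D : Set (ℂ × ℝ≥0)) : ℝ≥0∞ := ∑' d : D, (d.1.2 : ℝ≥0∞)

theorem holes_mono {D D' : Set (ℂ × ℝ≥0)} (h : D ⊆ D') : holes D ⊆ holes D' :=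
  biUnion_subset_biUnion_left h

theorem totalRadius_iUnion_le_tsum {ι : Type*} (D : ι → Set (ℂ × ℝ≥0)) :
    totalRadius (⋃ i, D i) ≤ ∑' i, totalRadius (D i) :=
  ENNReal.tsum_iUnion_le_tsum (fun d : ℂ × ℝ≥0 => (d.2 : ℝ≥0∞)) D

theorem exists_seq_iUnion_ball_eq_holes {D : Set (ℂ × ℝ≥0)} (hD : D.Countable) :
    ∃ d : ℕ → ℂ × ℝ≥0, ⋃ n, ball (d n).1 (d n).2 = holes D ∧
      ∑' n, ((d n).2 : ℝ≥0∞) = totalRadius D := by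
  have := hD.to_subtype
  obtain ⟨e, he⟩ := exists_injective_nat D
  let d : ℕ → ℂ × ℝ≥0 := Function.extend e Subtype.val 0
  have d_apply (x : D) : d (e x) = x := he.extend_apply _ _ x
  have d_eq_zero {n : ℕ} (hn : n ∉ range e) : d n = 0 := Function.extend_apply' _ _ n hn
  refine ⟨d, Subset.antisymm (iUnion_subset fun n => ?_) (iUnion₂_subset fun x hx => ?_), ?_⟩
  · by_cases hn : n ∈ range e
    · obtain ⟨x, rfl⟩ := hn
      rw [d_apply]
      exact subset_biUnion_of_mem (u := fun d : ℂ × ℝ≥0 => ball d.1 d.2) x.2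
    · simp [d_eq_zero hn]
  · refine subset_iUnion_of_subset (e ⟨x, hx⟩) ?_
    rw [d_apply]
  · rw [totalRadius, ← he.tsum_eq]
    · simp only [d_apply]
    · exact Function.support_subset_iff'.2 fun n hn => by simp [d_eq_zero hn]

/-- The disks of radius `δ / N` about the zeros `c + t ζ`, `ζᴺ = 1`, of `1 - ((z - c) / t)ᴺ`.
Their radii add up to at most `δ`, whatever `N` is. -/
noncomputable def rootDisks (c : ℂ) (t : ℝ) (δ : ℝ≥0) (N : ℕ) : Set (ℂ × ℝ≥0) :=
  (fun ζ => (c + t * ζ, δ / N)) '' {ζ : ℂ | ζ ^ N = 1}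

section RootDisks

variable {c : ℂ} {t : ℝ} {δ : ℝ≥0} {N : ℕ}

theorem encard_setOf_pow_eq_one_le {R : Type*} [CommRing R] [IsDomain R] {n : ℕ} (hn : n ≠ 0) :
    {ζ : R | ζ ^ n = 1}.encard ≤ n := by
  classical
  have : {ζ : R | ζ ^ n = 1} = Polynomial.nthRootsFinset n (1 : R) := by
    ext ζ
    simp [Polynomial.mem_nthRootsFinset (Nat.pos_of_ne_zero hn)]
  rw [this, Set.encard_coe_eq_coe_finsetCard, Nat.cast_le, Polynomial.nthRootsFinset_def]
  exact (Multiset.toFinset_card_le _).trans (Polynomial.card_nthRoots n 1)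

theorem countable_rootDisks (hN : N ≠ 0) : (rootDisks c t δ N).Countable :=
  (Set.finite_of_encard_le_coe (encard_setOf_pow_eq_one_le hN)).countable.image _

theorem totalRadius_rootDisks_le (hN : N ≠ 0) : totalRadius (rootDisks c t δ N) ≤ δ := by
  have hradius (d : rootDisks c t δ N) : d.1.2 = δ / N := by
    obtain ⟨_, ζ, -, rfl⟩ := d
    rfl
  calc
    totalRadius (rootDisks c t δ N) = (rootDisks c t δ N).encard * ((δ / N : ℝ≥0) : ℝ≥0∞) := by
      simp only [totalRadius, hradius, ENNReal.tsum_const, Set.encard]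
    _ ≤ N * ((δ / N : ℝ≥0) : ℝ≥0∞) := by
      gcongr
      exact ENat.toENNReal_le.2 ((Set.encard_image_le _ _).trans (encard_setOf_pow_eq_one_le hN))
    _ = δ := by
      exact_mod_cast mul_div_cancel₀ δ (Nat.cast_ne_zero.2 hN)

theorem div_le_norm_one_sub_pow_of_notMem_holes (ht : 0 < t) (hN : N ≠ 0) (hδt : δ ≤ t) {z : ℂ}
    (hz : z ∉ holes (rootDisks c t δ N)) : δ / t / 3 ≤ ‖1 - ((z - c) / t) ^ N‖ := by
  refine le_norm_one_sub_pow_of_forall_root hN (div_le_one_of_le₀ hδt ht.le) fun ζ hζ => ?_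
  have hdist : δ / N ≤ ‖z - (c + t * ζ)‖ := by
    have := fun h => hz (mem_biUnion (mem_image_of_mem _ hζ) h)
    simpa [dist_eq_norm] using this
  have hscale : (z - c) / t - ζ = (z - (c + t * ζ)) / t := by
    have : (t : ℂ) ≠ 0 := by exact_mod_cast ht.ne'
    field_simp
    ring
  rw [hscale, norm_div, Complex.norm_of_nonneg ht.le, div_right_comm]
  gcongr

end RootDisks

/-! ### Functions in `R(X)` -/

section RationalFunctions

variable {X : Set ℂ} [CompactSpace X]

theorem exists_mem_Rx_eq_inv_eval {q : Polynomial ℂ} (hq : ∀ x : X, q.eval (x : ℂ) ≠ 0) :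
    ∃ f ∈ Rx X, ∀ x : X, f x = (q.eval (x : ℂ))⁻¹ :=
  ⟨⟨fun x => (q.eval (x : ℂ))⁻¹, (q.continuous.comp continuous_subtype_val).inv₀ hq⟩,
    Subalgebra.le_topologicalClosure _ (Algebra.subset_adjoin ⟨1, q, hq, fun x => by simp⟩),
    fun _ => rfl⟩

theorem exists_mem_Rx_eq_inv_one_sub_pow {c : ℂ} {t : ℝ} {N : ℕ}
    (h : ∀ x : X, 1 - ((x - c) / t) ^ N ≠ 0) :
    ∃ f ∈ Rx X, ∀ x : X, f x = (1 - ((x - c) / t) ^ N)⁻¹ := by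
  have heval (z : ℂ) : (1 - (Polynomial.C (t : ℂ)⁻¹ * (Polynomial.X - Polynomial.C c)) ^ N).eval z =
      1 - ((z - c) / t) ^ N := by
    simp [div_eq_inv_mul]
  simpa only [heval] using exists_mem_Rx_eq_inv_eval fun x => (heval x).trans_ne (h x)

theorem RxRegular.of_forall_exists_ne_zero
    (h : ∀ x : X, ∀ δ > 0, ∃ f ∈ Rx X, f x ≠ 0 ∧ ∀ y, δ ≤ dist y x → f y = 0) : RxRegular X := by
  intro E hE x hx
  obtain ⟨δ, hδ, hball⟩ := Metric.isOpen_iff.1 hE.isOpen_compl x hx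
  obtain ⟨f, hf, hfx, hf_zero⟩ := h x δ hδ
  refine ⟨(f x)⁻¹ • f, Subalgebra.smul_mem _ hf _, by simp [hfx], fun y hy => ?_⟩
  simp [hf_zero y (not_lt.1 fun hlt => hball hlt hy)]

end RationalFunctions

theorem exists_forall_disjoint_rootDisks_exists_mem_Rx (c : ℂ) {r t R s : ℝ} {δ : ℝ≥0}
    (hr : 0 ≤ r) (hrt : r < t) (htR : t < R) (hs : 0 < s) (hδ : 0 < δ) (hδt : δ ≤ t) :
    ∃ N ≠ 0, ∀ (X : Set ℂ) [CompactSpace X], Disjoint X (holes (rootDisks c t δ N)) →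
      ∃ f ∈ Rx X, ‖f‖ ≤ 3 * t / δ ∧ (∀ x, f x ≠ 0) ∧
        (∀ x : X, dist (x : ℂ) c ≤ r → ‖f x - 1‖ ≤ s) ∧
        ∀ x : X, R ≤ dist (x : ℂ) c → ‖f x‖ ≤ s := by
  have ht : 0 < t := hr.trans_lt hrt
  obtain ⟨N, ⟨near_one, near_zero⟩, hN⟩ :=
    ((eventually_forall_norm_inv_one_sub_pow_sub_one_le (𝕜 := ℂ) (div_nonneg hr ht.le)
      ((div_lt_one ht).2 hrt) hs).and (eventually_forall_norm_inv_one_sub_pow_le (𝕜 := ℂ)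
      ((one_lt_div ht).2 htR) hs)).and (eventually_ne_atTop 0) |>.exists
  have hnorm (z : ℂ) : ‖(z - c) / t‖ = dist z c / t := by
    rw [norm_div, Complex.norm_of_nonneg ht.le, dist_eq_norm]
  refine ⟨N, hN, fun X _ hX => ?_⟩
  have hlower (x : X) : δ / t / 3 ≤ ‖1 - ((x - c) / t) ^ N‖ :=
    div_le_norm_one_sub_pow_of_notMem_holes ht hN hδt (disjoint_left.1 hX x.2)
  have hpos : 0 < δ / t / 3 := by positivity
  have hne (x : X) : 1 - ((x - c) / t) ^ N ≠ 0 := norm_pos_iff.1 (hpos.trans_le (hlower x))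
  obtain ⟨f, hf, hf_apply⟩ := exists_mem_Rx_eq_inv_one_sub_pow hne
  refine ⟨f, hf, (ContinuousMap.norm_le _ (by positivity)).2 fun x => ?_, fun x => ?_,
    fun x hx => ?_, fun x hx => ?_⟩ <;> rw [hf_apply]
  · calc
      _ ≤ (δ / t / 3)⁻¹ := by rw [norm_inv]; exact inv_anti₀ hpos (hlower x)
      _ = 3 * t / δ := by field_simp
  · exact inv_ne_zero (hne x)
  · exact near_one _ (by rw [hnorm]; gcongr)
  · exact near_zero _ (by rw [hnorm]; gcongr)

theorem exists_forall_disjoint_iUnion_rootDisks_exists_mem_Rx (c : ℂ) {r t : ℕ → ℝ} {δ : ℕ → ℝ≥0}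
    (hr : ∀ n, 0 ≤ r n) (hrt : ∀ n, r n < t n) (htr : ∀ n, t n < r (n + 1))
    (hδ : ∀ n, 0 < δ n) (hδt : ∀ n, δ n ≤ t n) :
    ∃ N : ℕ → ℕ, (∀ n, N n ≠ 0) ∧ ∀ (X : Set ℂ) [CompactSpace X],
      Disjoint X (holes (⋃ n, rootDisks c (t n) (δ n) (N n))) →
        ∃ f ∈ Rx X, ∀ x : X, f x = 0 ↔ ∀ n, r n < dist (x : ℂ) c := by
  let B : ℕ → ℝ := fun n => 3 * t n / δ n
  have one_le_B (n) : 1 ≤ B n := by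
    refine (one_le_div (NNReal.coe_pos.2 (hδ n))).2 ?_
    linarith [hr n, hrt n, hδt n]
  -- The bounds `B` do not involve the degrees `N`, so the tolerances `s` can be fixed first.
  obtain ⟨s, s_pos, s_summable⟩ := exists_pos_summable_mul
    (P := fun n => ∏ k ∈ Finset.range (n + 2), B k)
    fun n => Finset.prod_pos fun k _ => zero_lt_one.trans_le (one_le_B k)
  choose N hN hfactor using fun n => exists_forall_disjoint_rootDisks_exists_mem_Rx c
    (hr n) (hrt n) (htr n) (s_pos n) (hδ n) (hδt n)
  refine ⟨N, hN, fun X _ hX => ?_⟩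
  choose h h_mem h_norm h_ne near_one near_zero using fun n => hfactor n X
    (hX.mono_right (holes_mono (subset_iUnion (fun n => rootDisks c (t n) (δ n) (N n)) n)))
  have r_mono : Monotone r := monotone_nat_of_le_succ fun n => ((hrt n).trans (htr n)).le
  have V_mono : Monotone fun n => {x : X | dist (x : ℂ) c ≤ r n} :=
    fun m n hmn x hx => le_trans hx (r_mono hmn)
  obtain ⟨f, hf, hf_zero⟩ := exists_tendsto_prod_eq_zero_iff V_mono h_norm one_le_B
    (fun n => (s_pos n).le) s_summable h_ne near_one
    fun n x hx => near_zero n x (not_le.1 hx).le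
  refine ⟨f, (Subalgebra.isClosed_topologicalClosure _).mem_of_tendsto hf
    (Eventually.of_forall fun n => prod_mem fun k _ => h_mem k), fun x => ?_⟩
  simp only [hf_zero, mem_ofPred_eq, not_le]

theorem exists_disks_forall_disjoint_exists_mem_Rx_eq_zero_iff (c : ℂ) {ρ : ℝ} (hρ : 0 < ρ)
    {ε : ℝ≥0∞} (hε : ε ≠ 0) :
    ∃ D : Set (ℂ × ℝ≥0), D.Countable ∧ totalRadius D ≤ ε ∧
      ∀ (X : Set ℂ) [CompactSpace X], Disjoint X (holes D) →
        ∃ f ∈ Rx X, ∀ x : X, f x = 0 ↔ ρ ≤ dist (x : ℂ) c := by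
  obtain ⟨r, r_strictMono, hr, r_tendsto⟩ := exists_seq_strictMono_tendsto' hρ
  choose t hrt htr using fun n : ℕ => exists_between (r_strictMono n.lt_succ_self)
  obtain ⟨δ, δ_pos, hδ⟩ := ENNReal.exists_pos_sum_of_countable
    (lt_min hε.bot_lt (ENNReal.ofReal_pos.2 (hr 0).1)).ne' ℕ
  have δ_le_t (n) : (δ n : ℝ) ≤ t n := by
    have : (δ n : ℝ≥0∞) ≤ ENNReal.ofReal (r 0) :=
      (ENNReal.le_tsum n).trans (hδ.le.trans (min_le_right _ _))
    rw [← ENNReal.ofReal_coe_nnreal, ENNReal.ofReal_le_ofReal_iff (hr 0).1.le] at this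
    exact this.trans ((r_strictMono.monotone n.zero_le).trans (hrt n).le)
  obtain ⟨N, hN, hD⟩ := exists_forall_disjoint_iUnion_rootDisks_exists_mem_Rx c
    (fun n => (hr n).1.le) hrt htr δ_pos δ_le_t
  refine ⟨⋃ n, rootDisks c (t n) (δ n) (N n), countable_iUnion fun n => countable_rootDisks (hN n),
    ?_, fun X _ hX => ?_⟩
  · calc
      _ ≤ ∑' n, totalRadius (rootDisks c (t n) (δ n) (N n)) := totalRadius_iUnion_le_tsum _
      _ ≤ ∑' n, (δ n : ℝ≥0∞) := ENNReal.tsum_le_tsum fun n => totalRadius_rootDisks_le (hN n)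
      _ ≤ ε := hδ.le.trans (min_le_left _ _)
  · obtain ⟨f, hf, hf_zero⟩ := hD X hX
    exact ⟨f, hf, fun x => (hf_zero x).trans
      ⟨fun hx => le_of_tendsto' r_tendsto fun n => (hx n).le, fun hx n => (hr n).2.trans_le hx⟩⟩

theorem exists_disks_forall_disjoint_RxRegular {ε : ℝ≥0∞} (hε : ε ≠ 0) :
    ∃ D : Set (ℂ × ℝ≥0), D.Countable ∧ totalRadius D < ε ∧
      ∀ (X : Set ℂ) [CompactSpace X], Disjoint X (holes D) → RxRegular X := by
  obtain ⟨η, η_pos, hη⟩ := ENNReal.exists_pos_sum_of_countable' hε (ℕ × ℕ)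
  choose D D_countable D_radius hD using fun i : ℕ × ℕ =>
    exists_disks_forall_disjoint_exists_mem_Rx_eq_zero_iff (TopologicalSpace.denseSeq ℂ i.1)
      (Nat.one_div_pos_of_nat (α := ℝ) (n := i.2)) (η_pos i).ne'
  refine ⟨⋃ i, D i, countable_iUnion D_countable,
    (totalRadius_iUnion_le_tsum D).trans_lt ((ENNReal.tsum_le_tsum D_radius).trans_lt hη),
    fun X _ hX => .of_forall_exists_ne_zero fun x δ hδ => ?_⟩
  obtain ⟨l, hl⟩ := exists_nat_one_div_lt (half_pos hδ)
  obtain ⟨m, hm⟩ := (TopologicalSpace.denseRange_denseSeq ℂ).exists_dist_lt (x : ℂ)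
    (Nat.one_div_pos_of_nat (α := ℝ) (n := l))
  obtain ⟨f, hf, hf_zero⟩ :=
    hD (m, l) X (hX.mono_right (holes_mono (subset_iUnion D (m, l))))
  refine ⟨f, hf, fun hfx => hm.not_ge ((hf_zero x).1 hfx), fun y hy => (hf_zero y).2 ?_⟩
  have := dist_triangle_right (y : ℂ) x (TopologicalSpace.denseSeq ℂ m)
  rw [Subtype.dist_eq] at hy
  linarith

theorem stmt_8_general {ε : ℝ} (hε : 0 < ε) :
    ∃ (a : ℕ → ℂ) (r : ℕ → ℝ), (∀ n, 0 ≤ r n) ∧ Summable r ∧ ∑' n, r n < ε ∧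
      ∀ (X : Set ℂ) [CompactSpace X], (∀ n, Disjoint X (ball (a n) (r n))) → RxRegular X := by
  obtain ⟨D, D_countable, hDε, hD⟩ :=
    exists_disks_forall_disjoint_RxRegular (ENNReal.ofReal_pos.2 hε).ne'
  obtain ⟨d, hd_union, hd_sum⟩ := exists_seq_iUnion_ball_eq_holes D_countable
  rw [← hd_sum] at hDε
  have hsum : Summable fun n => (d n).2 := ENNReal.tsum_coe_ne_top_iff_summable.1 hDε.ne_top
  refine ⟨fun n => (d n).1, fun n => (d n).2, fun n => NNReal.coe_nonneg _,
    NNReal.summable_coe.2 hsum, ?_, fun X _ hX => hD X ?_⟩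
  · rw [← ENNReal.coe_tsum hsum, ← ENNReal.ofReal_coe_nnreal,
      ENNReal.ofReal_lt_ofReal_iff hε] at hDε
    simpa only [NNReal.coe_tsum] using hDε
  · rwa [← hd_union, disjoint_iUnion_right]

namespace SwissCheese

/-- The Swiss cheese obtained from the annulus `s₁ ≤ |z - b| ≤ s₀` by deleting the open disks
`ball (a n) (r n)`; the disk with index `n` becomes the one with index `n + 2`. -/
def ofAnnulus (b : ℂ) {s₀ s₁ : ℝ} (hs₀ : 0 ≤ s₀) (hs₁ : 0 ≤ s₁) (a : ℕ → ℂ) {r : ℕ → ℝ}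
    (hr : ∀ n, 0 ≤ r n) : SwissCheese where
  a
    | 0 | 1 => b
    | n + 2 => a n
  r
    | 0 => s₀
    | 1 => s₁
    | n + 2 => r n
  r_nonneg
    | 0 => hs₀
    | 1 => hs₁
    | n + 2 => hr n

theorem disjoint_cheeseSet_ball (A : SwissCheese) {n : ℕ} (hn : 1 ≤ n) :
    Disjoint A.cheeseSet (ball (A.a n) (A.r n)) :=
  disjoint_sdiff_left.mono_right
    (subset_biUnion_of_mem (u := fun n => ball (A.a n) (A.r n)) (mem_Ici.2 hn))

end SwissCheese

/-- for every `b ∈ ℂ`, `s₀ > s₁ ≥ 0` and `ε > 0` there is an abstract Swiss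
cheese `A` with `a₀ = a₁ = b`, `r₀ = s₀`, `r₁ = s₁` and `ρ_ann(A) = ∑_{n ≥ 2} r_n < ε`,
such that `R(X_A)` is regular. -/
theorem stmt_8 (b : ℂ) (s₀ s₁ : ℝ) (hs₁ : 0 ≤ s₁) (hs : s₁ < s₀) (ε : ℝ) (hε : 0 < ε) :
    ∃ A : SwissCheese, A.a 0 = b ∧ A.a 1 = b ∧ A.r 0 = s₀ ∧ A.r 1 = s₁ ∧
      (Summable fun n => A.r (n + 2)) ∧ A.annRadSum < ε ∧
      RxRegular A.cheeseSet := by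
  obtain ⟨a, r, hr, hsum, hlt, hreg⟩ := stmt_8_general hε
  exact ⟨.ofAnnulus b (hs₁.trans hs.le) hs₁ a hr, rfl, rfl, rfl, rfl, hsum, hlt,
    hreg _ fun n => SwissCheese.disjoint_cheeseSet_ball _ (n := n + 2) (by omega)⟩
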